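/- Under the Weierstrass setting, assume that I_s + J₁ is invertible and rank(U) = s. Let V, W ∈ ℂ^{n×s} be matrices whose column spaces equal the column space of U and of A·U + B·U, respectively. Then there exists a nonzero constant c ∈ ℂ such that for every z ∈ ℂ, det(z·W*·B·V − W*·A·V) = c·det(z·I_s − J₁). In particular, the s×s matrix z·W*·B·V − W*·A·V is singular if and only if z is a diagonal entry of J₁. -/

import Mathlib

open Matrix

/-!
Write `P` for the first `s` columns of `S`. The Weierstrass form gives `A P = B P J₁` with `B P` of
full column rank. Each `F k` factors through `P` on the left, so `rank U = s` forces
`span U = span P`, and then `(A + B) P = B P (1 + J₁)` gives `span W = span (B P)`. Hence `V = P M`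
with `M` invertible and `Wᴴ (z B - A) V = (Wᴴ B P) (z - J₁) M`, where `Wᴴ B P` is invertible because
`W` and `B P` span the same space.
-/

section Columns

variable {m k l ι R : Type*} [Fintype k] [Fintype ι] [CommSemiring R]

theorem mulVec_injective_of_mul_left {L : Matrix m k R} {Q : Matrix k ι R}
    (h : Function.Injective (L * Q).mulVec) : Function.Injective Q.mulVec := by
  refine Function.Injective.of_comp (f := L.mulVec) ?_
  simpa only [Function.comp_def, mulVec_mulVec] using h

theorem mulVec_injective_submatrix_columns {Q : Matrix m k R} (hQ : Function.Injective Q.mulVec)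
    {f : ι → k} (hf : Function.Injective f) :
    Function.Injective (Q.submatrix id f).mulVec :=
  mulVec_injective_iff.mpr ((mulVec_injective_iff.mp hQ).comp f hf)

theorem mul_fromBlocks_submatrix_inl (Q : Matrix m k R) (e : ι ⊕ l ≃ k)
    (X : Matrix ι ι R) (C : Matrix ι l R) (Z : Matrix l l R) :
    (Q * (fromBlocks X C 0 Z).submatrix e.symm e.symm).submatrix id (e ∘ Sum.inl) =
      Q.submatrix id (e ∘ Sum.inl) * X := by
  have : Fintype l := Fintype.ofInjective _ (e.injective.comp Sum.inr_injective)
  ext i j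
  simp [mul_apply, ← e.sum_comp]

end Columns

section Range

variable {m k l ι : Type*} [Fintype k] [Fintype l] [Fintype ι]

theorem exists_eq_mul_of_range_le {R : Type*} [CommSemiring R] {P : Matrix m k R}
    {V : Matrix m l R} (h : LinearMap.range V.mulVecLin ≤ LinearMap.range P.mulVecLin) :
    ∃ M : Matrix k l R, V = P * M := by
  classical
  have exists_coords (j : l) : ∃ x : k → R, P *ᵥ x = V.col j := by
    obtain ⟨x, hx⟩ := h ⟨Pi.single j 1, rfl⟩
    exact ⟨x, by simpa using hx⟩
  choose x hx using exists_coords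
  exact ⟨of fun i j => x j i, ext_col fun j => (hx j).symm⟩

theorem range_mulVecLin_mul_eq_of_rank_eq_card {K : Type*} [Field K] [Finite m] {P : Matrix m k K}
    {X : Matrix k l K} (h : (P * X).rank = Fintype.card k) :
    LinearMap.range (P * X).mulVecLin = LinearMap.range P.mulVecLin := by
  refine Submodule.eq_of_le_of_finrank_le ?_ (P.rank_le_card_width.trans h.ge)
  rw [mulVecLin_mul]
  exact LinearMap.range_comp_le_range _ _

theorem exists_isUnit_eq_mul_of_range_le [DecidableEq ι] {K : Type*} [Field K]
    {P V : Matrix m ι K} (hP : Function.Injective P.mulVec)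
    (h : LinearMap.range P.mulVecLin ≤ LinearMap.range V.mulVecLin) :
    ∃ M : Matrix ι ι K, IsUnit M ∧ V = P * M := by
  obtain ⟨X, rfl⟩ := exists_eq_mul_of_range_le h
  have hX : IsUnit X := mulVec_injective_iff_isUnit.mp (mulVec_injective_of_mul_left hP)
  exact ⟨X⁻¹, isUnit_nonsing_inv_iff.mpr hX,
    (mul_nonsing_inv_cancel_right _ _ ((isUnit_iff_isUnit_det X).mp hX)).symm⟩

theorem isUnit_conjTranspose_mul_of_range_le [Fintype m] [DecidableEq ι] {K : Type*} [Field K]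
    [PartialOrder K] [StarRing K] [StarOrderedRing K] {Q W : Matrix m ι K}
    (hQ : Function.Injective Q.mulVec)
    (h : LinearMap.range Q.mulVecLin ≤ LinearMap.range W.mulVecLin) : IsUnit (Wᴴ * Q) := by
  refine mulVec_injective_iff_isUnit.mp
    ((injective_iff_map_eq_zero (Wᴴ * Q).mulVecLin).mpr fun v hv => ?_)
  obtain ⟨x, hx : W *ᵥ x = Q *ᵥ v⟩ := h ⟨v, rfl⟩
  have gram_eq_zero : (Wᴴ * W) *ᵥ x = 0 := by
    rw [← mulVec_mulVec, hx, mulVec_mulVec]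
    exact hv
  have hQv : Q *ᵥ v = 0 := hx ▸ (conjTranspose_mul_self_mulVec_eq_zero W x).mp gram_eq_zero
  exact hQ (hQv.trans (mulVec_zero Q).symm)

end Range

section Triangular

theorem det_smul_one_sub_eq_zero_iff_of_blockTriangular {ι R : Type*} [Fintype ι] [LinearOrder ι]
    [CommRing R] [IsDomain R] {J : Matrix ι ι R} (hJ : J.BlockTriangular id) (z : R) :
    (z • (1 : Matrix ι ι R) - J).det = 0 ↔ ∃ i, z = J i i := by
  rw [smul_one_eq_diagonal, ← scalar_apply, ← eval_charpoly, charpoly_of_isUpperTriangular J hJ,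
    Polynomial.eval_prod, Finset.prod_eq_zero_iff]
  simp [sub_eq_zero]

theorem blockTriangular_of_fromBlocks_submatrix {a b d R : Type*} [LinearOrder a] [LinearOrder d]
    [Zero R] {X : Matrix a a R} {C : Matrix a b R} {D : Matrix b a R} {Z : Matrix b b R}
    {e : a ⊕ b ≃ d} (he : StrictMono (e ∘ Sum.inl))
    (h : ((fromBlocks X C D Z).submatrix e.symm e.symm).BlockTriangular id) :
    X.BlockTriangular id := fun i j hij => by
  simpa using h (he hij)

end Triangular

section Krylov

/-- The block Krylov matrix `[X, J X, …, J ^ (g - 1) X]`; the column index `(k, j)` stands for the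
`j`-th column of the block `J ^ k X`. -/
def blockKrylov {ι h R : Type*} [Fintype ι] [DecidableEq ι] [Semiring R] (J : Matrix ι ι R)
    (X : Matrix ι h R) (g : ℕ) : Matrix ι (Fin g × h) R :=
  of fun i p => (J ^ (p.1 : ℕ) * X) i p.2

theorem eq_mul_blockKrylov {k l ι h R : Type*} [Fintype ι] [DecidableEq ι] [Fintype l] [Semiring R]
    {P : Matrix k ι R} {J : Matrix ι ι R} {L : Matrix ι l R} {Y : Matrix l h R} {g : ℕ}
    {U : Matrix k (Fin g × h) R}
    (hU : ∀ i (p : Fin g × h), U i p = (P * J ^ (p.1 : ℕ) * L * Y) i p.2) :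
    U = P * blockKrylov J (L * Y) g := by
  ext i p
  rw [hU, Matrix.mul_assoc _ L, Matrix.mul_assoc]
  rfl

theorem range_eq_of_moments {k l ι h K : Type*} [Finite k] [Fintype ι] [DecidableEq ι] [Fintype l]
    [Fintype h] [Field K] {P : Matrix k ι K} {J : Matrix ι ι K} {L : Matrix ι l K}
    {Y : Matrix l h K} {g : ℕ} {U : Matrix k (Fin g × h) K}
    (hU : ∀ i (p : Fin g × h), U i p = (P * J ^ (p.1 : ℕ) * L * Y) i p.2)
    (hrank : U.rank = Fintype.card ι) :
    LinearMap.range U.mulVecLin = LinearMap.range P.mulVecLin := by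
  rw [eq_mul_blockKrylov hU] at hrank ⊢
  exact range_mulVecLin_mul_eq_of_rank_eq_card hrank

end Krylov

/-- The columns of `P` are a basis of a deflating subspace of the pencil `z B - A` on which it has
only finite eigenvalues, those of `J`. Injectivity of `B * P` makes the columns of `P` independent
and excludes the eigenvalue at infinity. -/
structure IsDeflatingBasis {m k ι K : Type*} [Fintype k] [Fintype ι] [CommRing K]
    (A B : Matrix m k K) (P : Matrix k ι K) (J : Matrix ι ι K) : Prop where
  mul_eq : A * P = B * P * J
  injective : Function.Injective (B * P).mulVec

namespace IsDeflatingBasis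

section Blocks

variable {m k a b d K : Type*} [Fintype k] [Fintype a] [Fintype d] [CommRing K]
  {A B : Matrix m k K}

theorem submatrix_inl {P : Matrix k d K} {e : a ⊕ b ≃ d} {X : Matrix a a K} {C : Matrix a b K}
    {Z : Matrix b b K}
    (h : IsDeflatingBasis A B P ((fromBlocks X C 0 Z).submatrix e.symm e.symm)) :
    IsDeflatingBasis A B (P.submatrix id (e ∘ Sum.inl)) X where
  mul_eq := calc
    A * P.submatrix id (e ∘ Sum.inl) = (A * P).submatrix id (e ∘ Sum.inl) := rfl
    _ = B * P.submatrix id (e ∘ Sum.inl) * X := by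
      rw [h.mul_eq, mul_fromBlocks_submatrix_inl]
      rfl
  injective := mulVec_injective_submatrix_columns h.injective (e.injective.comp Sum.inl_injective)

theorem of_fromBlocks [Fintype m] [DecidableEq m] [DecidableEq a] {T : Matrix m m K}
    (hT : IsUnit T) {S : Matrix k m K} {e : a ⊕ b ≃ m} {X : Matrix a a K} {C C' : Matrix a b K}
    {Z N : Matrix b b K}
    (hA : T * A * S = (fromBlocks X C 0 Z).submatrix e.symm e.symm)
    (hB : T * B * S = (fromBlocks 1 C' 0 N).submatrix e.symm e.symm) :
    IsDeflatingBasis A B (S.submatrix id (e ∘ Sum.inl)) X := by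
  set P := S.submatrix id (e ∘ Sum.inl)
  set E := (1 : Matrix m m K).submatrix id (e ∘ Sum.inl)
  have hTA : T * (A * P) = E * X := calc
    T * (A * P) = (T * A * S).submatrix id (e ∘ Sum.inl) := (Matrix.mul_assoc T A P).symm
    _ = E * X := by rw [hA, ← mul_fromBlocks_submatrix_inl, Matrix.one_mul]
  have hTB : T * (B * P) = E := calc
    T * (B * P) = (T * B * S).submatrix id (e ∘ Sum.inl) := (Matrix.mul_assoc T B P).symm
    _ = E * (1 : Matrix a a K) := by rw [hB, ← mul_fromBlocks_submatrix_inl, Matrix.one_mul]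
    _ = E := Matrix.mul_one E
  have hE : Function.Injective E.mulVec :=
    mulVec_injective_submatrix_columns (mulVec_injective_of_isUnit isUnit_one)
      (e.injective.comp Sum.inl_injective)
  refine ⟨?_, mulVec_injective_of_mul_left (hTB ▸ hE)⟩
  have := hT.invertible
  rw [← Matrix.mul_right_inj_of_invertible T, hTA, ← Matrix.mul_assoc, hTB]

end Blocks

section Projection

variable {m k l ι K : Type*} [Fintype k] [Fintype l] [Fintype ι] [DecidableEq ι] [Field K]
  {A B : Matrix m k K} {P : Matrix k ι K} {J : Matrix ι ι K}

theorem range_add_mul_eq (h : IsDeflatingBasis A B P J) (hJ : IsUnit (1 + J)) {U : Matrix k l K}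
    (hU : LinearMap.range U.mulVecLin = LinearMap.range P.mulVecLin) :
    LinearMap.range (A * U + B * U).mulVecLin = LinearMap.range (B * P).mulVecLin := by
  have add_mul_basis : (A + B) * P = B * P * (1 + J) := by
    rw [Matrix.add_mul, h.mul_eq, Matrix.mul_add, Matrix.mul_one, add_comm]
  calc LinearMap.range (A * U + B * U).mulVecLin
      = LinearMap.range ((A + B) * P).mulVecLin := by
        rw [← Matrix.add_mul, mulVecLin_mul, mulVecLin_mul, LinearMap.range_comp,
          LinearMap.range_comp, hU]
    _ = LinearMap.range (B * P).mulVecLin := by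
        rw [add_mul_basis, mulVecLin_mul]
        exact LinearMap.range_comp_of_range_eq_top _
          (LinearMap.range_eq_top.mpr (mulVec_surjective_iff_isUnit.mpr hJ))

theorem projected_pencil_eq [Fintype m] [Star K] (h : IsDeflatingBasis A B P J) (W : Matrix m ι K)
    (M : Matrix ι ι K) (z : K) :
    z • (Wᴴ * B * (P * M)) - Wᴴ * A * (P * M) = Wᴴ * (B * P) * (z • 1 - J) * M := by
  have hA : Wᴴ * A * (P * M) = Wᴴ * (B * P) * J * M := calc
    Wᴴ * A * (P * M) = Wᴴ * (A * P) * M := by simp only [Matrix.mul_assoc]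
    _ = Wᴴ * (B * P) * J * M := by rw [h.mul_eq, ← Matrix.mul_assoc Wᴴ]
  have hB : Wᴴ * B * (P * M) = Wᴴ * (B * P) * M := by simp only [Matrix.mul_assoc]
  rw [hA, hB, Matrix.mul_sub, Matrix.sub_mul, Matrix.mul_smul, Matrix.mul_one, Matrix.smul_mul]

theorem exists_det_projected_pencil_eq [Fintype m] [PartialOrder K] [StarRing K]
    [StarOrderedRing K] (h : IsDeflatingBasis A B P J) {V : Matrix k ι K} {W : Matrix m ι K}
    (hV : LinearMap.range P.mulVecLin ≤ LinearMap.range V.mulVecLin)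
    (hW : LinearMap.range (B * P).mulVecLin ≤ LinearMap.range W.mulVecLin) :
    ∃ c : K, c ≠ 0 ∧ ∀ z : K,
      (z • (Wᴴ * B * V) - Wᴴ * A * V).det = c * (z • (1 : Matrix ι ι K) - J).det := by
  obtain ⟨M, hM, rfl⟩ :=
    exists_isUnit_eq_mul_of_range_le (mulVec_injective_of_mul_left h.injective) hV
  have hWBP : IsUnit (Wᴴ * (B * P)) := isUnit_conjTranspose_mul_of_range_le h.injective hW
  refine ⟨(Wᴴ * (B * P)).det * M.det, ?_, fun z => ?_⟩
  · exact (((isUnit_iff_isUnit_det _).mp hWBP).mul ((isUnit_iff_isUnit_det _).mp hM)).ne_zero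
  · rw [h.projected_pencil_eq, det_mul, det_mul, mul_right_comm]

end Projection

end IsDeflatingBasis

theorem det_projected_pencil_general {m k ι K : Type*} [Fintype m] [Fintype k] [Fintype ι]
    [LinearOrder ι] [Field K] [PartialOrder K] [StarRing K] [StarOrderedRing K]
    {A B : Matrix m k K} {P : Matrix k ι K} {J : Matrix ι ι K} (h : IsDeflatingBasis A B P J)
    (hJ : J.BlockTriangular id) {V : Matrix k ι K} {W : Matrix m ι K}
    (hV : LinearMap.range P.mulVecLin ≤ LinearMap.range V.mulVecLin)
    (hW : LinearMap.range (B * P).mulVecLin ≤ LinearMap.range W.mulVecLin) :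
    (∃ c : K, c ≠ 0 ∧ ∀ z : K,
        (z • (Wᴴ * B * V) - Wᴴ * A * V).det = c * (z • (1 : Matrix ι ι K) - J).det) ∧
      ∀ z : K, (¬ IsUnit (z • (Wᴴ * B * V) - Wᴴ * A * V)) ↔ ∃ i, z = J i i := by
  obtain ⟨c, hc, hdet⟩ := h.exists_det_projected_pencil_eq hV hW
  refine ⟨⟨c, hc, hdet⟩, fun z => ?_⟩
  rw [isUnit_iff_isUnit_det, isUnit_iff_ne_zero, not_not, hdet, mul_eq_zero, or_iff_right hc,
    det_smul_one_sub_eq_zero_iff_of_blockTriangular hJ]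

/-- If the columns of `V` span `span{U}` and those of `W` span
`span{A·U + B·U}`, then there is a nonzero constant `c` with
`det(z·W*·B·V − W*·A·V) = c·det(z·I_s − J₁)` for all `z`; in particular the projected
pencil is singular exactly at the diagonal entries of `J₁`. -/
theorem det_projected_pencil
    (n d s h g : ℕ) (hs : 0 < s) (hsd : s ≤ d) (hdn : d ≤ n) (hg : 1 ≤ g)
    (hhg : s ≤ h * g)
    (A B S T : Matrix (Fin n) (Fin n) ℂ) (hS : IsUnit S) (hT : IsUnit T)
    (J : Matrix (Fin d) (Fin d) ℂ) (hJtri : J.BlockTriangular (id : Fin d → Fin d))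
    (N : Matrix (Fin (n - d)) (Fin (n - d)) ℂ) (hN : IsNilpotent N)
    (hA : T * A * S =
      (Matrix.fromBlocks J 0 0 (1 : Matrix (Fin (n - d)) (Fin (n - d)) ℂ)).submatrix
        (finSumFinEquiv.trans (finCongr (Nat.add_sub_cancel' hdn))).symm
        (finSumFinEquiv.trans (finCongr (Nat.add_sub_cancel' hdn))).symm)
    (hB : T * B * S =
      (Matrix.fromBlocks (1 : Matrix (Fin d) (Fin d) ℂ) 0 0 N).submatrix
        (finSumFinEquiv.trans (finCongr (Nat.add_sub_cancel' hdn))).symm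
        (finSumFinEquiv.trans (finCongr (Nat.add_sub_cancel' hdn))).symm)
    (J₁ : Matrix (Fin s) (Fin s) ℂ) (J₂ : Matrix (Fin (d - s)) (Fin (d - s)) ℂ)
    (hJ : J = (Matrix.fromBlocks J₁ 0 0 J₂).submatrix
        (finSumFinEquiv.trans (finCongr (Nat.add_sub_cancel' hsd))).symm
        (finSumFinEquiv.trans (finCongr (Nat.add_sub_cancel' hsd))).symm)
    (F : ℕ → Matrix (Fin n) (Fin n) ℂ)
    (hF : ∀ k : ℕ, F k =
      S.submatrix id (Fin.castLE (hsd.trans hdn)) * (J₁ ^ k) *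
        S⁻¹.submatrix (Fin.castLE (hsd.trans hdn)) id)
    (Y : Matrix (Fin n) (Fin h) ℂ)
    (U : Matrix (Fin n) (Fin g × Fin h) ℂ)
    (hU : ∀ (i : Fin n) (p : Fin g × Fin h), U i p = (F (p.1 : ℕ) * Y) i p.2)
    (hinv : IsUnit ((1 : Matrix (Fin s) (Fin s) ℂ) + J₁))
    (hrankU : U.rank = s)
    (V W : Matrix (Fin n) (Fin s) ℂ)
    (hV : LinearMap.range V.mulVecLin = LinearMap.range U.mulVecLin)
    (hW : LinearMap.range W.mulVecLin = LinearMap.range (A * U + B * U).mulVecLin) :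
    (∃ c : ℂ, c ≠ 0 ∧ ∀ z : ℂ,
        (z • (Wᴴ * B * V) - Wᴴ * A * V).det =
          c * (z • (1 : Matrix (Fin s) (Fin s) ℂ) - J₁).det) ∧
      ∀ z : ℂ, (¬ IsUnit (z • (Wᴴ * B * V) - Wᴴ * A * V)) ↔ ∃ i : Fin s, z = J₁ i i := by
  -- `Fin.castLE` is definitionally the composite of the two `Sum.inl` block embeddings.
  have hP : IsDeflatingBasis A B (S.submatrix id (Fin.castLE (hsd.trans hdn))) J₁ :=
    (hJ ▸ IsDeflatingBasis.of_fromBlocks hT hA hB).submatrix_inl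
  have hUP : LinearMap.range U.mulVecLin =
      LinearMap.range (S.submatrix id (Fin.castLE (hsd.trans hdn))).mulVecLin :=
    range_eq_of_moments (fun i p => by rw [hU, hF]) (hrankU.trans (Fintype.card_fin s).symm)
  have hJ₁ : J₁.BlockTriangular id :=
    blockTriangular_of_fromBlocks_submatrix (fun _ _ hij => hij) (hJ ▸ hJtri)
  open scoped ComplexOrder in
  exact det_projected_pencil_general hP hJ₁ (hV.trans hUP).ge
    (hW.trans (hP.range_add_mul_eq hinv hUP)).ge
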